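/- Let A > 0, B ∈ ℝ, μ ∈ (2/3, 2) with μ ≠ 1, and let f be the 2π-periodic extension of u ↦ A|u|^{2/3} + B|u|^μ from [−π,π). Then there exist functions R₁ and R₂ defined near 0 with R₁(u) = O(|u|^{2/3}) and R₂(u) = o(|u|^{μ−1/3}) as u → 0, such that for all u ≠ 0 near 0, f(u) · (K_∞ f)(u) = −(2/√3) A² |u|^{1/3} − A B (2/√3 + μ tan(πμ/2)) |u|^{μ−1/3} + R₁(u) + R₂(u). -/

import Mathlib

open Real MeasureTheory Filter Set Asymptotics

/-- Principal value (at `u`) of the integral of `g` over `(-π, π)`. -/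
noncomputable def pvInt (g : ℝ → ℝ) (u : ℝ) : ℝ :=
  limUnder (nhdsWithin (0:ℝ) (Set.Ioi 0))
    (fun ε : ℝ => ∫ x in {x : ℝ | x ∈ Set.Ioo (-π) π ∧ ε < |x - u|}, g x)

/-- Periodic Hilbert transform of a `2π`-periodic function:
`ℋ(f)(u) = (1/π) Σ_{n ∈ ℤ} p.v.∫_{-π}^{π} f(x)/(x - u + 2πn) dx`. -/
noncomputable def periodicHilbert (f : ℝ → ℝ) (u : ℝ) : ℝ :=
  (1/π) * ∑' n : ℤ, pvInt (fun x => f x / (x - u + 2*π*(n : ℝ))) u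

/-- The operator `K_∞ = -ℋ ∂ᵤ` acting via the a.e. derivative. -/
noncomputable def Kinf (f : ℝ → ℝ) (u : ℝ) : ℝ := - periodicHilbert (deriv f) u

/-- The `2π`-periodic extension of `g : [-π, π) → ℝ`. -/
noncomputable def perExt (g : ℝ → ℝ) (x : ℝ) : ℝ :=
  g (x - 2*π*(⌊(x + π)/(2*π)⌋ : ℝ))

lemma cot_hasSum (r : ℝ) (h : ∀ n : ℤ, (n : ℝ) ≠ r) :
    HasSum (fun n : ℕ => 1 / (r - (n + 1)) + 1 / (r + (n + 1))) (π * Real.cot (π * r) - 1 / r) := by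
  have hz : (r : ℂ) ∈ Complex.integerComplement := by
    rintro ⟨n, hn⟩
    exact h n (by exact_mod_cast hn)
  have h1 := (summable_cotTerm hz).hasSum
  have h2 := cot_series_rep' hz
  rw [← Complex.hasSum_ofReal]
  push_cast
  rw [h2]
  exact h1

lemma tan_aux1 (r : ℝ) (h0 : 0 < r) (h1 : r < 1) (k : ℕ) :
    1 / (r - (((2 * k + 1 : ℕ) : ℝ) + 1)) + 1 / (r + (((2 * k + 1 : ℕ) : ℝ) + 1)) =
     (1 / 2) * (1 / (r / 2 - ((k : ℝ) + 1)) + 1 / (r / 2 + (k + 1))) := by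
  have : (k : ℝ) ≥ 0 := k.cast_nonneg
  push_cast
  have e1 : r / 2 - ((k : ℝ) + 1) = (r - ((2 * k + 1) + 1)) / 2 := by ring
  have e2 : r / 2 + ((k : ℝ) + 1) = (r + ((2 * k + 1) + 1)) / 2 := by ring
  rw [e1, e2, one_div_div, one_div_div]
  ring

lemma tan_aux2 (r : ℝ) (h0 : 0 < r) (h1 : r < 1) (k : ℕ) :
    1 / (2 * (k : ℝ) + 1 - r) - 1 / (2 * k + 1 + r) =
     - (1 / (r - (((2 * k : ℕ) : ℝ) + 1)) + 1 / (r + (((2 * k : ℕ) : ℝ) + 1))) := by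
  push_cast
  rw [show 2 * (k : ℝ) + 1 - r = - (r - ((2 * k) + 1)) by ring, show 2 * (k : ℝ) + 1 + r = r + ((2 * k) + 1) by ring,
    one_div_neg_eq_neg_one_div]
  ring

lemma tan_aux3 (r : ℝ) (h0 : 0 < r) (h1 : r < 1) :
    π * Real.cot (π * r) - (π / 2) * Real.cot (π * (r / 2)) = - ((π / 2) * Real.tan (π * r / 2)) := by
  have hp := Real.pi_pos
  have hs : 0 < Real.sin (π * r / 2) := Real.sin_pos_of_pos_of_lt_pi (by positivity) (by nlinarith)
  have hc : 0 < Real.cos (π * r / 2) :=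
    Real.cos_pos_of_mem_Ioo ⟨by linarith [mul_pos hp h0], by nlinarith⟩
  rw [Real.cot_eq_cos_div_sin, Real.cot_eq_cos_div_sin, Real.tan_eq_sin_div_cos]
  rw [show π * r = 2 * (π * r / 2) by ring, show π * (r / 2) = π * r / 2 by ring,
    show 2 * (π * r / 2) / 2 = π * r / 2 by ring]
  rw [Real.sin_two_mul, Real.cos_two_mul]
  have h2 := Real.sin_sq_add_cos_sq (π * r / 2)
  generalize Real.sin (π * r / 2) = x at *
  generalize Real.cos (π * r / 2) = y at *
  have h3 : x ^ 2 = 1 - y ^ 2 := by linarith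
  field_simp
  rw [h3]
  ring

lemma tan_aux4 (r : ℝ) (h0 : 0 < r) (h1 : r < 1) (n : ℤ) : (n : ℝ) ≠ r := by
  intro hn
  rw [← hn] at h0 h1
  norm_cast at h0 h1
  omega

lemma tan_hasSum (r : ℝ) (h0 : 0 < r) (h1 : r < 1) :
    HasSum (fun n : ℕ => 1 / (2 * (n : ℝ) + 1 - r) - 1 / (2 * n + 1 + r))
      ((π / 2) * Real.tan (π * r / 2)) := by
  have a1 := cot_hasSum r (tan_aux4 r h0 h1)
  have a2 := cot_hasSum (r / 2) (tan_aux4 (r / 2) (by linarith) (by linarith))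
  obtain ⟨f, hf⟩ : ∃ f : ℕ → ℝ, f = fun n : ℕ => 1 / (r - ((n : ℝ) + 1)) + 1 / (r + (n + 1)) := ⟨_, rfl⟩
  rw [← hf] at a1
  obtain ⟨S, hS⟩ : ∃ S, HasSum (fun k => f (2 * k)) S :=
    a1.summable.comp_injective (i := fun k : ℕ => 2 * k)
      (fun a b hab => Nat.eq_of_mul_eq_mul_left two_pos hab)
  have b2 : HasSum (fun k : ℕ => f (2 * k + 1))
      ((1 / 2) * (π * Real.cot (π * (r / 2)) - 1 / (r / 2))) := by
    have a3 := a2.mul_left (1 / 2)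
    have hfun : (fun k : ℕ => f (2 * k + 1)) =
      fun k : ℕ => (1 / 2) * (1 / (r / 2 - ((k : ℝ) + 1)) + 1 / (r / 2 + (k + 1))) := by
     funext k
     rw [hf]
     exact tan_aux1 r h0 h1 k
    rw [hfun]
    exact a3
  have c := (HasSum.even_add_odd hS b2).unique a1
  have key : (π / 2) * Real.tan (π * r / 2) = - S := by
    have := tan_aux3 r h0 h1
    have h3 : 1 / (r / 2) = 2 * (1 / r) := by field_simp
    rw [h3] at c
    linarith
  rw [key]
  have hfun : (fun n : ℕ => 1 / (2 * (n : ℝ) + 1 - r) - 1 / (2 * n + 1 + r)) =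
     fun k : ℕ => - f (2 * k) := by
    funext k
    rw [hf]
    exact tan_aux2 r h0 h1 k
  rw [hfun]
  exact hS.neg

/-- Kernel `(1 - t^r)/(1 - t^2)`. -/
noncomputable def kk (r t : ℝ) : ℝ := (1 - t ^ r) / (1 - t ^ 2)

lemma kk_bound (r : ℝ) (hr : -1 < r) (t : ℝ) (ht : t ∈ Ioo (0:ℝ) 1) :
    |kk r t| ≤ (1 + |r|) * (1 + t ^ r) := by
  obtain ⟨h0, h1⟩ := ht
  have hp : 0 < t ^ r := Real.rpow_pos_of_pos h0 r
  have hd : 0 < 1 - t ^ 2 := by nlinarith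
  have ha := abs_nonneg r
  have hb : |1 - t ^ r| ≤ (1 + |r|) * (1 + t ^ r) * (1 - t) := by
    have base : ∀ q : ℝ, 0 ≤ q → 0 ≤ 1 - t ^ q ∧ 1 - t ^ q ≤ (1 + q) * (1 - t) := by
      intro q hq
      refine ⟨by linarith [Real.rpow_le_one h0.le h1.le hq], ?_⟩
      rcases le_total 1 q with h | h
      · have := one_add_mul_self_le_rpow_one_add (s := t - 1) (by linarith) h
        rw [show 1 + (t - 1) = t by ring] at this
        nlinarith
      · have := Real.rpow_le_rpow_of_exponent_ge h0 h1.le h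
        rw [Real.rpow_one] at this
        nlinarith
    rcases le_total 0 r with h | h
    · obtain ⟨b1, b2⟩ := base r h
      rw [abs_of_nonneg b1, abs_of_nonneg h]
      have : 0 ≤ (1 + r) * (1 - t) * t ^ r := by
        have : 0 ≤ 1 - t := by linarith
        positivity
      nlinarith
    · obtain ⟨b1, b2⟩ := base (-r) (by linarith)
      have e : t ^ r - 1 = t ^ r * (1 - t ^ (-r)) := by
        rw [mul_sub, ← Real.rpow_add h0]; simp
      rw [abs_sub_comm, e, abs_of_nonneg (mul_nonneg hp.le b1), abs_of_nonpos h]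
      have : 0 ≤ (1 + -r) * (1 - t) := by
        apply mul_nonneg <;> linarith
      nlinarith [mul_le_mul_of_nonneg_left b2 hp.le]
  rw [kk, abs_div, abs_of_pos hd, div_le_iff₀ hd]
  refine hb.trans ?_
  apply mul_le_mul_of_nonneg_left _ (by positivity)
  nlinarith

lemma rpow_intOn (r : ℝ) (hr : -1 < r) (c : ℝ) (hc : 0 < c) : IntegrableOn (fun t : ℝ => t ^ r) (Ioo 0 c) :=
  (intervalIntegral.integrableOn_Ioo_rpow_iff hc).2 hr

lemma rpow_int (r : ℝ) (hr : -1 < r) (c : ℝ) (hc : 0 < c) :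
    ∫ t in Ioo 0 c, t ^ r = c ^ (r + 1) / (r + 1) := by
  rw [← integral_Ioc_eq_integral_Ioo, ← intervalIntegral.integral_of_le hc.le,
    integral_rpow (Or.inl hr), Real.zero_rpow (by linarith)]
  simp

lemma kk_meas (r : ℝ) : Measurable (kk r) := by
  unfold kk; fun_prop

lemma kk_intOn (r : ℝ) (hr : -1 < r) : IntegrableOn (kk r) (Ioo 0 1) := by
  refine Integrable.mono' (g := fun t => (1 + |r|) * (1 + t ^ r)) ?_ (kk_meas r).aestronglyMeasurable ?_
  · apply Integrable.const_mul
    apply Integrable.add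
    · simp
    · exact rpow_intOn r hr 1 one_pos
  · filter_upwards [self_mem_ae_restrict measurableSet_Ioo] with t ht
    exact kk_bound r hr t ht

noncomputable def JJ (r : ℝ) : ℝ := ∫ t in Ioo (0:ℝ) 1, kk r t

lemma JJ_sub (r : ℝ) (h0 : 0 < r) (h1 : r < 1) :
    JJ r - JJ (-r) = (π / 2) * Real.tan (π * r / 2) := by
  have hi : ∀ n : ℕ, IntegrableOn (fun t : ℝ => t ^ (2 * (n:ℝ) - r) - t ^ (2 * (n:ℝ) + r)) (Ioo 0 1) := by
    intro n
    have : (n : ℝ) ≥ 0 := n.cast_nonneg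
    exact (rpow_intOn _ (by linarith) 1 one_pos).sub (rpow_intOn _ (by linarith) 1 one_pos)
  have hv : ∀ n : ℕ, ∫ t in Ioo (0:ℝ) 1, (t ^ (2 * (n:ℝ) - r) - t ^ (2 * (n:ℝ) + r)) =
      1 / (2 * (n : ℝ) + 1 - r) - 1 / (2 * n + 1 + r) := by
    intro n
    have : (n : ℝ) ≥ 0 := n.cast_nonneg
    rw [integral_sub (rpow_intOn _ (by linarith) 1 one_pos) (rpow_intOn _ (by linarith) 1 one_pos),
      rpow_int _ (by linarith) 1 one_pos, rpow_int _ (by linarith) 1 one_pos, Real.one_rpow, Real.one_rpow]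
    congr 2 <;> ring
  have hn : ∀ n : ℕ, ∫ t in Ioo (0:ℝ) 1, ‖t ^ (2 * (n:ℝ) - r) - t ^ (2 * (n:ℝ) + r)‖ =
      1 / (2 * (n : ℝ) + 1 - r) - 1 / (2 * n + 1 + r) := by
    intro n
    rw [← hv n]
    apply setIntegral_congr_fun measurableSet_Ioo
    intro t ht
    simp only
    rw [Real.norm_of_nonneg]
    have := Real.rpow_le_rpow_of_exponent_ge ht.1 ht.2.le (show 2 * (n:ℝ) - r ≤ 2 * n + r by linarith)
    linarith
  have hs := tan_hasSum r h0 h1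
  have key := hasSum_integral_of_summable_integral_norm hi (by simp_rw [hn]; exact hs.summable)
  simp_rw [hv] at key
  rw [← key.unique hs, JJ, JJ, ← integral_sub (kk_intOn r (by linarith)) (kk_intOn (-r) (by linarith))]
  apply setIntegral_congr_fun measurableSet_Ioo
  intro t ht
  have hg : HasSum (fun n : ℕ => (t ^ 2) ^ n * (t ^ (-r) - t ^ r)) ((1 - t ^ 2)⁻¹ * (t ^ (-r) - t ^ r)) :=
    (hasSum_geometric_of_lt_one (by positivity) (by nlinarith [ht.1, ht.2])).mul_right _
  have hg' : ∀ n : ℕ, t ^ (2 * (n:ℝ) - r) - t ^ (2 * (n:ℝ) + r) = (t ^ 2) ^ n * (t ^ (-r) - t ^ r) := by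
    intro n
    rw [sub_eq_add_neg (2 * (n:ℝ)) r, Real.rpow_add ht.1, Real.rpow_add ht.1, ← pow_mul]
    rw [show (2 * (n:ℝ)) = ((2 * n : ℕ) : ℝ) by push_cast; ring, Real.rpow_natCast]
    ring
  simp_rw [hg', hg.tsum_eq, kk]
  rw [div_sub_div_same, div_eq_inv_mul]
  ring

lemma FF_split (s v : ℝ) (hs0 : 0 < s) (hv : 0 < v) (hv1 : v ≤ 1)
    (hint : IntegrableOn (fun x : ℝ => 2 * (x ^ s - v ^ s) / (x ^ 2 - v ^ 2)) (Ioo 0 π)) :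
    ∫ x in Ioo 0 π, 2 * (x ^ s - v ^ s) / (x ^ 2 - v ^ 2) =
      2 * v ^ (s - 1) * (JJ s + ∫ t in Ioo (v / π) 1, (t ^ (-s) - 1) / (1 - t ^ 2)) := by
  have hp : v < π := by linarith [Real.pi_gt_three]
  have hp0 := Real.pi_pos
  have hvs : v ^ s = v * v ^ (s - 1) := by
    rw [Real.rpow_sub_one hv.ne']; field_simp
  rw [← Ioc_union_Ioo_eq_Ioo hv.le hp, setIntegral_union (by
    rw [Set.disjoint_left]; rintro x ⟨_, h⟩ ⟨h', _⟩; linarith) measurableSet_Ioo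
    (hint.mono_set (fun x hx => ⟨hx.1, hx.2.trans_lt hp⟩))
    (hint.mono_set (fun x hx => ⟨hv.trans hx.1, hx.2⟩)), integral_Ioc_eq_integral_Ioo, mul_add]
  congr 1
  · have him : (fun t => v * t) '' Ioo 0 1 = Ioo 0 v := by
      rw [Set.image_mul_left_Ioo hv]; simp
    rw [← him, integral_image_eq_integral_abs_deriv_smul (f' := fun _ => v) measurableSet_Ioo
      (fun x _ => by simpa using ((hasDerivAt_id x).const_mul v).hasDerivWithinAt)
      (fun a _ b _ h => mul_left_cancel₀ hv.ne' h), JJ, ← integral_const_mul]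
    apply setIntegral_congr_fun measurableSet_Ioo
    intro t ht
    simp only [smul_eq_mul, abs_of_pos hv, kk]
    rw [Real.mul_rpow hv.le ht.1.le, hvs]
    have : 1 - t ^ 2 ≠ 0 := by nlinarith [ht.1, ht.2]
    have h2 : (v * t) ^ 2 - v ^ 2 = - (v ^ 2 * (1 - t ^ 2)) := by ring
    rw [h2]
    field_simp
    ring
  · have him : (fun t => v * t⁻¹) '' Ioo (v / π) 1 = Ioo v π := by
      ext x
      constructor
      · rintro ⟨t, ht, rfl⟩
        have ht0 : 0 < t := lt_trans (by positivity) ht.1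
        have h1 := ht.1
        rw [div_lt_iff₀ hp0] at h1
        simp only [← div_eq_mul_inv]
        refine ⟨?_, ?_⟩
        · rw [lt_div_iff₀ ht0]; nlinarith [ht.2]
        · rw [div_lt_iff₀ ht0]; linarith
      · intro hx
        have hx0 : 0 < x := hv.trans hx.1
        refine ⟨v / x, ⟨?_, ?_⟩, ?_⟩
        · exact div_lt_div_of_pos_left hv hx0 hx.2
        · rw [div_lt_one hx0]; exact hx.1
        · simp only [inv_div]; field_simp
    rw [← him, integral_image_eq_integral_abs_deriv_smul (f' := fun t => v * (-(t ^ 2)⁻¹)) measurableSet_Ioo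
      (fun x hx => by
        have hx0 : 0 < x := lt_trans (by positivity) hx.1
        exact ((hasDerivAt_inv hx0.ne').const_mul v).hasDerivWithinAt)
      (fun a _ b _ h => inv_injective (mul_left_cancel₀ hv.ne' h)), ← integral_const_mul]
    apply setIntegral_congr_fun measurableSet_Ioo
    intro t ht
    have ht0 : 0 < t := lt_trans (by positivity) ht.1
    simp only [smul_eq_mul, mul_neg, abs_neg]
    rw [abs_of_pos (by positivity), Real.mul_rpow hv.le (by positivity), hvs, Real.inv_rpow ht0.le,
      ← Real.rpow_neg ht0.le]
    have : 1 - t ^ 2 ≠ 0 := by nlinarith [ht.1, ht.2]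
    have h2 : (v * t⁻¹) ^ 2 - v ^ 2 = (v ^ 2 * (1 - t ^ 2)) / t ^ 2 := by field_simp
    rw [h2]
    field_simp

lemma kk_tail (r δ : ℝ) (hr : -1 < r) (hδ : 0 < δ) (hδ1 : δ < 1) :
    ∫ t in Ioo δ 1, kk r t = JJ r - ∫ t in Ioo 0 δ, kk r t := by
  have h := kk_intOn r hr
  rw [JJ, ← Ioc_union_Ioo_eq_Ioo hδ.le hδ1, setIntegral_union (by
    rw [Set.disjoint_left]; rintro x ⟨_, h⟩ ⟨h', _⟩; linarith) measurableSet_Ioo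
    (h.mono_set (fun x hx => ⟨hx.1, hx.2.trans_lt hδ1⟩))
    (h.mono_set (fun x hx => ⟨hδ.trans hx.1, hx.2⟩)), integral_Ioc_eq_integral_Ioo]
  ring

lemma kk_head (r δ : ℝ) (hr : -1 < r) (hδ : 0 < δ) (hδ1 : δ < 1) :
    |∫ t in Ioo 0 δ, kk r t| ≤ (1 + |r|) * (δ + δ ^ (r + 1) / (r + 1)) := by
  have hi : IntegrableOn (fun t : ℝ => (1 + |r|) * (1 + t ^ r)) (Ioo 0 δ) := by
    apply Integrable.const_mul
    apply Integrable.add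
    · simp
    · exact rpow_intOn r hr δ hδ
  have := norm_integral_le_of_norm_le (μ := volume.restrict (Ioo 0 δ)) (f := kk r) hi (by
    filter_upwards [self_mem_ae_restrict measurableSet_Ioo] with t ht
    exact kk_bound r hr t ⟨ht.1, ht.2.trans hδ1⟩)
  rw [Real.norm_eq_abs] at this
  refine this.trans (le_of_eq ?_)
  rw [integral_const_mul, integral_add (by simp) (rpow_intOn r hr δ hδ), rpow_int r hr δ hδ]
  simp [hδ.le]

lemma FF_bound (s : ℝ) (hs0 : 0 < s) (hs2 : s < 2) (hs1 : s ≠ 1) :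
    ∃ C : ℝ, ∀ v : ℝ, 0 < v → v ≤ 1 →
      IntegrableOn (fun x : ℝ => 2 * (x ^ s - v ^ s) / (x ^ 2 - v ^ 2)) (Ioo 0 π) →
      |(∫ x in Ioo 0 π, 2 * (x ^ s - v ^ s) / (x ^ 2 - v ^ 2)) - π * Real.tan (π * s / 2) * v ^ (s - 1)| ≤ C := by
  have hp := Real.pi_gt_three
  rcases lt_or_gt_of_ne hs1 with h | h
  · refine ⟨2 * (2 * (1 + 1 / (1 - s))), fun v hv hv1 hint => ?_⟩
    rw [FF_split s v hs0 hv hv1 hint]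
    have hδ : 0 < v / π := by positivity
    have hδ1 : v / π < 1 := by rw [div_lt_one (by positivity)]; linarith
    have e : ∫ t in Ioo (v / π) 1, (t ^ (-s) - 1) / (1 - t ^ 2) = - ∫ t in Ioo (v / π) 1, kk (-s) t := by
      rw [← integral_neg]
      congr 1
      funext t
      simp only [kk]; ring
    rw [e, kk_tail (-s) _ (by linarith) hδ hδ1]
    have hJ := JJ_sub s hs0 h
    have hh := kk_head (-s) _ (by linarith) hδ hδ1
    rw [abs_neg, abs_of_pos hs0] at hh
    have hvp : 0 < v ^ (s - 1) := Real.rpow_pos_of_pos hv _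
    have h1 : v / π ≤ v := div_le_self hv.le (by linarith)
    have h3 : v ^ (s - 1) * v ^ (-s + 1) = 1 := by
      rw [← Real.rpow_add hv]; simp
    have h2 : (v / π) ^ (-s + 1) ≤ v ^ (-s + 1) := Real.rpow_le_rpow hδ.le h1 (by linarith)
    have h4 : v ≤ v ^ (-s + 1) := by
      have := Real.rpow_le_rpow_of_exponent_ge hv hv1 (show -s + 1 ≤ 1 by linarith)
      rwa [Real.rpow_one] at this
    have hs' : 0 < -s + 1 := by linarith
    have hb : |∫ t in Ioo 0 (v / π), kk (-s) t| ≤ 2 * (1 + 1 / (1 - s)) * v ^ (-s + 1) := by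
      refine hh.trans ?_
      have : (v / π) ^ (-s + 1) / (-s + 1) ≤ v ^ (-s + 1) / (-s + 1) := by gcongr
      calc (1 + s) * (v / π + (v / π) ^ (-s + 1) / (-s + 1)) ≤ 2 * (v ^ (-s + 1) + v ^ (-s + 1) / (-s + 1)) := by
            apply mul_le_mul
            · linarith
            · linarith
            · positivity
            · norm_num
        _ = _ := by rw [show -s + 1 = 1 - s by ring]; ring
    have : 2 * v ^ (s - 1) * (JJ s + -(JJ (-s) - ∫ t in Ioo 0 (v / π), kk (-s) t)) - π * Real.tan (π * s / 2) * v ^ (s - 1)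
        = 2 * (v ^ (s - 1) * ∫ t in Ioo 0 (v / π), kk (-s) t) := by
      linear_combination 2 * v ^ (s - 1) * hJ
    rw [this, abs_mul, abs_mul, abs_of_pos hvp, abs_two]
    have := mul_le_mul_of_nonneg_left hb hvp.le
    have e2 : v ^ (s - 1) * (2 * (1 + 1 / (1 - s)) * v ^ (-s + 1)) = 2 * (1 + 1 / (1 - s)) := by
      linear_combination 2 * (1 + 1 / (1 - s)) * h3
    rw [e2] at this
    linarith
  · refine ⟨2 * (π ^ (s - 1) / (s - 1)) + 2 * ((1 + |2 - s|) * (1 + 1 / (3 - s))), fun v hv hv1 hint => ?_⟩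
    rw [FF_split s v hs0 hv hv1 hint]
    have hδ : 0 < v / π := by positivity
    have hδ1 : v / π < 1 := by rw [div_lt_one (by positivity)]; linarith
    have hcont : IntegrableOn (fun t : ℝ => t ^ (-s)) (Ioo (v / π) 1) := by
      have : IntegrableOn (fun t : ℝ => t ^ (-s)) (Icc (v / π) 1) := by
        apply ContinuousOn.integrableOn_Icc
        intro t ht
        exact (Real.continuousAt_rpow_const t (-s) (Or.inl (by linarith [ht.1]))).continuousWithinAt
      exact this.mono_set Ioo_subset_Icc_self
    have e : ∫ t in Ioo (v / π) 1, (t ^ (-s) - 1) / (1 - t ^ 2) = (∫ t in Ioo (v / π) 1, t ^ (-s)) - ∫ t in Ioo (v / π) 1, kk (2 - s) t := by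
      rw [← integral_sub hcont ((kk_intOn (2 - s) (by linarith)).mono_set (fun x hx => ⟨hδ.trans hx.1, hx.2⟩))]
      apply setIntegral_congr_fun measurableSet_Ioo
      intro t ht
      have ht0 : 0 < t := hδ.trans ht.1
      have : 1 - t ^ 2 ≠ 0 := by nlinarith [ht.1, ht.2]
      simp only [kk]
      rw [show 2 - s = -s + 2 by ring, Real.rpow_add ht0, Real.rpow_two]
      field_simp
      ring
    have e1 : ∫ t in Ioo (v / π) 1, t ^ (-s) = ((v / π) ^ (1 - s) - 1) / (s - 1) := by
      rw [← integral_Ioc_eq_integral_Ioo, ← intervalIntegral.integral_of_le hδ1.le, integral_rpow]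
      · rw [Real.one_rpow, show -s + 1 = -(s - 1) by ring, div_neg, ← neg_div, show -(s - 1) = 1 - s by ring]
        ring
      · right
        refine ⟨by linarith, ?_⟩
        rw [Set.uIcc_of_le hδ1.le]
        rintro ⟨h, _⟩; linarith
    have e3 : JJ s - JJ (s - 2) = 1 / (s - 1) := by
      rw [JJ, JJ, ← integral_sub (kk_intOn s (by linarith)) (kk_intOn (s - 2) (by linarith))]
      have : ∫ t in Ioo (0:ℝ) 1, t ^ (s - 2) = 1 / (s - 1) := by
        rw [rpow_int _ (by linarith) 1 one_pos, Real.one_rpow]; congr 1; ring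
      rw [← this]
      apply setIntegral_congr_fun measurableSet_Ioo
      intro t ht
      have ht0 : 0 < t := ht.1
      have : 1 - t ^ 2 ≠ 0 := by nlinarith [ht.1, ht.2]
      simp only [kk]
      have : t ^ s = t ^ (s - 2) * t ^ 2 := by
        rw [← Real.rpow_two, ← Real.rpow_add ht0]; congr 1; ring
      rw [this]
      field_simp
      ring
    have hJ := JJ_sub (2 - s) (by linarith) (by linarith)
    have ht : Real.tan (π * (2 - s) / 2) = - Real.tan (π * s / 2) := by
      rw [show π * (2 - s) / 2 = π - π * s / 2 by ring, Real.tan_pi_sub]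
    rw [ht, show -(2 - s) = s - 2 by ring] at hJ
    rw [e, e1, kk_tail (2 - s) _ (by linarith) hδ hδ1]
    have hh := kk_head (2 - s) _ (by linarith) hδ hδ1
    have hvp : 0 < v ^ (s - 1) := Real.rpow_pos_of_pos hv _
    have hvp1 : v ^ (s - 1) ≤ 1 := Real.rpow_le_one hv.le hv1 (by linarith)
    have hb : |∫ t in Ioo 0 (v / π), kk (2 - s) t| ≤ (1 + |2 - s|) * (1 + 1 / (3 - s)) := by
      refine hh.trans ?_
      apply mul_le_mul_of_nonneg_left _ (by positivity)
      have : (v / π) ^ (2 - s + 1) ≤ 1 := Real.rpow_le_one hδ.le hδ1.le (by linarith)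
      have h3 : 0 < 3 - s := by linarith
      rw [show 2 - s + 1 = 3 - s by ring] at *
      gcongr
    have h5 : v ^ (s - 1) * (v / π) ^ (1 - s) = π ^ (s - 1) := by
      rw [Real.div_rpow hv.le (by linarith), show 1 - s = -(s - 1) by ring, Real.rpow_neg hv.le,
        Real.rpow_neg (by linarith)]
      field_simp
    have : 2 * v ^ (s - 1) * (JJ s + (((v / π) ^ (1 - s) - 1) / (s - 1) - (JJ (2 - s) - ∫ t in Ioo 0 (v / π), kk (2 - s) t))) - π * Real.tan (π * s / 2) * v ^ (s - 1)
        = 2 * (π ^ (s - 1) / (s - 1)) + 2 * (v ^ (s - 1) * ∫ t in Ioo 0 (v / π), kk (2 - s) t) := by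
      have e4 : ((v / π) ^ (1 - s) - 1) / (s - 1) = (v / π) ^ (1 - s) / (s - 1) - 1 / (s - 1) := sub_div _ _ _
      rw [e4]
      linear_combination 2 * v ^ (s - 1) * e3 - 2 * v ^ (s - 1) * hJ + 2 / (s - 1) * h5
    rw [this]
    have hs' : 0 < s - 1 := by linarith
    refine (abs_add_le _ _).trans ?_
    rw [abs_of_pos (by positivity), abs_mul, abs_mul, abs_two, abs_of_pos hvp]
    have := mul_le_mul hvp1 hb (abs_nonneg _) zero_le_one
    linarith

lemma trunc_meas (u ε : ℝ) : MeasurableSet {x : ℝ | x ∈ Set.Ioo (-π) π ∧ ε < |x - u|} := by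
  apply MeasurableSet.inter measurableSet_Ioo
  exact measurableSet_lt (f := fun _ : ℝ => ε) (g := fun x : ℝ => |x - u|) measurable_const (by fun_prop)

lemma trunc_tendsto (g : ℝ → ℝ) (u : ℝ) (hg : IntegrableOn g (Ioo (-π) π)) :
    Tendsto (fun ε : ℝ => ∫ x in {x : ℝ | x ∈ Set.Ioo (-π) π ∧ ε < |x - u|}, g x)
      (nhdsWithin (0:ℝ) (Set.Ioi 0)) (nhds (∫ x in Ioo (-π) π, g x)) := by
  have h : ∀ ε : ℝ, ∫ x in {x : ℝ | x ∈ Set.Ioo (-π) π ∧ ε < |x - u|}, g x =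
      ∫ x in Ioo (-π) π, {x : ℝ | ε < |x - u|}.indicator g x := by
    intro ε
    rw [setIntegral_indicator (measurableSet_lt measurable_const (by fun_prop))]
    rfl
  simp_rw [h]
  refine tendsto_integral_filter_of_dominated_convergence (fun x => ‖g x‖) ?_ ?_ hg.norm ?_
  · refine Eventually.of_forall fun ε => ?_
    exact hg.aestronglyMeasurable.indicator (measurableSet_lt measurable_const (by fun_prop))
  · refine Eventually.of_forall fun ε => Eventually.of_forall fun x => ?_
    exact norm_indicator_le_norm_self _ _
  · have : ∀ᵐ x ∂(volume.restrict (Ioo (-π) π)), x ≠ u := by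
      apply ae_restrict_of_ae
      exact Measure.ae_ne volume u
    filter_upwards [this] with x hx
    apply tendsto_const_nhds.congr'
    have hpos : 0 < |x - u| := abs_pos.2 (sub_ne_zero.2 hx)
    filter_upwards [nhdsWithin_le_nhds (Iio_mem_nhds hpos)] with ε hε
    rw [Set.indicator_of_mem]
    exact hε

lemma trunc_inv (u : ℝ) (hu : u ∈ Ioo (-π) π) :
    ∀ᶠ ε in nhdsWithin (0:ℝ) (Set.Ioi 0),
      IntegrableOn (fun x : ℝ => 1 / (x - u)) {x : ℝ | x ∈ Set.Ioo (-π) π ∧ ε < |x - u|} ∧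
      ∫ x in {x : ℝ | x ∈ Set.Ioo (-π) π ∧ ε < |x - u|}, 1 / (x - u) = Real.log ((π - u) / (π + u)) := by
  obtain ⟨h1, h2⟩ := hu
  have hm : 0 < min (π - u) (π + u) := lt_min (by linarith) (by linarith)
  filter_upwards [nhdsWithin_le_nhds (Iio_mem_nhds hm), self_mem_nhdsWithin] with ε hε hε0
  have hε0 : 0 < ε := hε0
  have ha : ε < π - u := lt_of_lt_of_le hε (min_le_left _ _)
  have hb : ε < π + u := lt_of_lt_of_le hε (min_le_right _ _)
  have hset : {x : ℝ | x ∈ Set.Ioo (-π) π ∧ ε < |x - u|} = Ioo (-π) (u - ε) ∪ Ioo (u + ε) π := by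
    ext x
    simp only [Set.mem_ofPred_eq, Set.mem_union, Set.mem_Ioo, lt_abs]
    constructor
    · rintro ⟨⟨a, b⟩, c | c⟩
      · right; constructor <;> linarith
      · left; constructor <;> linarith
    · rintro (⟨a, b⟩ | ⟨a, b⟩)
      · exact ⟨⟨by linarith, by linarith⟩, Or.inr (by linarith)⟩
      · exact ⟨⟨by linarith, by linarith⟩, Or.inl (by linarith)⟩
  have i1 : IntegrableOn (fun x : ℝ => 1 / (x - u)) (Ioo (-π) (u - ε)) := by
    refine IntegrableOn.mono_set (t := Icc (-π) (u - ε)) ?_ Ioo_subset_Icc_self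
    apply ContinuousOn.integrableOn_Icc
    apply ContinuousOn.div continuousOn_const (by fun_prop)
    intro x hx; have := hx.2; linarith
  have i2 : IntegrableOn (fun x : ℝ => 1 / (x - u)) (Ioo (u + ε) π) := by
    refine IntegrableOn.mono_set (t := Icc (u + ε) π) ?_ Ioo_subset_Icc_self
    apply ContinuousOn.integrableOn_Icc
    apply ContinuousOn.div continuousOn_const (by fun_prop)
    intro x hx; have := hx.1; linarith
  rw [hset]
  refine ⟨i1.union i2, ?_⟩
  rw [setIntegral_union (by rw [Set.disjoint_left]; rintro x ⟨_, h⟩ ⟨h', _⟩; linarith) measurableSet_Ioo i1 i2,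
    ← integral_Ioc_eq_integral_Ioo, ← integral_Ioc_eq_integral_Ioo,
    ← intervalIntegral.integral_of_le (by linarith), ← intervalIntegral.integral_of_le (by linarith),
    intervalIntegral.integral_comp_sub_right (fun x => 1 / x), intervalIntegral.integral_comp_sub_right (fun x => 1 / x),
    integral_one_div_of_neg (by linarith) (by linarith), integral_one_div_of_pos (by linarith) (by linarith),
    ← Real.log_mul]
  · congr 1
    rw [show u - ε - u = - ε by ring, show u + ε - u = ε by ring, show -π - u = - (π + u) by ring]
    have : π + u ≠ 0 := by linarith
    field_simp
  · apply div_ne_zero <;> linarith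
  · apply div_ne_zero <;> linarith

lemma pv_general (h : ℝ → ℝ) (u : ℝ) (hu : u ∈ Ioo (-π) π)
    (hi : IntegrableOn (fun x => (h x - h u) / (x - u)) (Ioo (-π) π)) :
    Tendsto (fun ε : ℝ => ∫ x in {x : ℝ | x ∈ Set.Ioo (-π) π ∧ ε < |x - u|}, h x / (x - u))
      (nhdsWithin (0:ℝ) (Set.Ioi 0))
      (nhds ((∫ x in Ioo (-π) π, (h x - h u) / (x - u)) + h u * Real.log ((π - u) / (π + u)))) := by
  refine ((trunc_tendsto _ u hi).add_const _).congr' ?_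
  filter_upwards [trunc_inv u hu] with ε hε
  rw [← hε.2, ← integral_const_mul, ← integral_add (hi.mono_set (fun x hx => hx.1)) (hε.1.const_mul _)]
  congr 1
  funext x
  ring

lemma pv_lim (g h : ℝ → ℝ) (u L : ℝ) (hgh : ∀ x ∈ Ioo (-π) π, x ≠ 0 → g x = h x)
    (hL : Tendsto (fun ε : ℝ => ∫ x in {x : ℝ | x ∈ Set.Ioo (-π) π ∧ ε < |x - u|}, h x)
      (nhdsWithin (0:ℝ) (Set.Ioi 0)) (nhds L)) : pvInt g u = L := by
  apply Tendsto.limUnder_eq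
  refine hL.congr fun ε => ?_
  apply setIntegral_congr_ae (trunc_meas u ε)
  filter_upwards [Measure.ae_ne volume (0:ℝ)] with x hx hx'
  exact (hgh x hx'.1 hx).symm

lemma fold_int (g : ℝ → ℝ) (hg : IntegrableOn g (Ioo (-π) π)) :
    IntegrableOn (fun x => g x + g (-x)) (Ioo 0 π) ∧
    ∫ x in Ioo (-π) π, g x = ∫ x in Ioo 0 π, (g x + g (-x)) := by
  have hp := Real.pi_pos
  have hg' : IntervalIntegrable g volume (-π) π := by
    rw [intervalIntegrable_iff_integrableOn_Ioo_of_le (by linarith)]; exact hg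
  have a : IntervalIntegrable g volume (-π) 0 := hg'.mono_set (by
    rw [uIcc_of_le (by linarith), uIcc_of_le (by linarith)]; exact Icc_subset_Icc_right hp.le)
  have b : IntervalIntegrable g volume 0 π := hg'.mono_set (by
    rw [uIcc_of_le (by linarith), uIcc_of_le (by linarith)]; exact Icc_subset_Icc_left (by linarith))
  have a' : IntervalIntegrable (fun x => g (-x)) volume 0 π := by
    have := (IntervalIntegrable.iff_comp_neg (f := g) (a := -π) (b := 0)).1 a
    rw [neg_neg, neg_zero] at this
    exact this.symm
  constructor
  · rw [← intervalIntegrable_iff_integrableOn_Ioo_of_le hp.le]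
    exact b.add a'
  · rw [← integral_Ioc_eq_integral_Ioo, ← integral_Ioc_eq_integral_Ioo, ← intervalIntegral.integral_of_le (by linarith),
      ← intervalIntegral.integral_of_le hp.le, intervalIntegral.integral_add b a',
      intervalIntegral.integral_comp_neg, neg_zero, ← intervalIntegral.integral_add_adjacent_intervals a b]
    ring

/-- The odd power `sign x * |x|^(s-1)`. -/
noncomputable def hh (s x : ℝ) : ℝ := x * |x| ^ (s - 2)

lemma hh_neg (s x : ℝ) : hh s (-x) = - hh s x := by simp [hh]

lemma hh_mul (s x : ℝ) (hx : x ≠ 0) : x * hh s x = |x| ^ s := by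
  have : 0 < |x| := abs_pos.2 hx
  rw [hh, ← mul_assoc, ← sq, ← sq_abs, ← Real.rpow_two, ← Real.rpow_add this]
  congr 1; ring

lemma hh_abs (s x : ℝ) (hx : x ≠ 0) : |hh s x| = |x| ^ (s - 1) := by
  have : 0 < |x| := abs_pos.2 hx
  rw [hh, abs_mul, abs_of_nonneg (Real.rpow_nonneg this.le _), show s - 1 = 1 + (s - 2) by ring,
    Real.rpow_add this, Real.rpow_one]

lemma hh_meas (s : ℝ) : Measurable (hh s) := by unfold hh; fun_prop

lemma hh_int (s : ℝ) (hs : 0 < s) : IntegrableOn (hh s) (Ioo (-π) π) := by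
  have hp := Real.pi_pos
  have a : IntervalIntegrable (fun x : ℝ => x ^ (s - 1)) volume 0 π := intervalIntegral.intervalIntegrable_rpow' (by linarith)
  have b : IntervalIntegrable (hh s) volume 0 π := by
    refine a.congr (fun x hx => ?_)
    rw [uIoc_of_le hp.le] at hx
    have := hh_abs s x hx.1.ne'
    rw [abs_of_pos hx.1] at this
    rw [← this, abs_of_nonneg]
    exact mul_nonneg hx.1.le (Real.rpow_nonneg (abs_nonneg _) _)
  have c : IntervalIntegrable (hh s) volume (-π) 0 := by
    rw [IntervalIntegrable.iff_comp_neg]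
    simp_rw [hh_neg]
    rw [neg_neg, neg_zero]
    exact b.neg.symm
  rw [← intervalIntegrable_iff_integrableOn_Ioo_of_le (by linarith)]
  exact c.trans b

lemma hh_contAt (s x : ℝ) (hx : x ≠ 0) : DifferentiableAt ℝ (hh s) x := by
  unfold hh
  have : 0 < |x| := abs_pos.2 hx
  apply DifferentiableAt.mul differentiableAt_id
  exact (differentiableAt_abs hx).rpow_const (Or.inl this.ne')

lemma hh_quot (s u : ℝ) (hs : 0 < s) (hu : u ≠ 0) :
    IntegrableOn (fun x => (hh s x - hh s u) / (x - u)) (Ioo (-π) π) := by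
  have hu' : 0 < |u| := abs_pos.2 hu
  set r := |u| / 2 with hr
  have hr0 : 0 < r := by positivity
  have h1 : IntegrableOn (fun x => (hh s x - hh s u) / (x - u)) (Icc (u - r) (u + r)) := by
    have hc : ContinuousOn (dslope (hh s) u) (Icc (u - r) (u + r)) := by
      rw [continuousOn_dslope (Icc_mem_nhds (by linarith) (by linarith))]
      refine ⟨fun x hx => (hh_contAt s x ?_).continuousAt.continuousWithinAt, hh_contAt s u hu⟩
      rintro rfl
      have := hx.1; have := hx.2
      have : |u| ≤ r := abs_le.2 ⟨by linarith, by linarith⟩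
      linarith
    refine (hc.integrableOn_Icc (μ := volume)).congr ?_
    filter_upwards [ae_restrict_of_ae (Measure.ae_ne volume u)] with x hx
    rw [dslope_of_ne _ hx, slope_def_field]
  have h2 : IntegrableOn (fun x => (hh s x - hh s u) / (x - u)) (Ioo (-π) π \ Icc (u - r) (u + r)) := by
    have hi : IntegrableOn (fun x => (|hh s x| + |hh s u|) / r) (Ioo (-π) π \ Icc (u - r) (u + r)) := by
      refine IntegrableOn.mono_set (t := Ioo (-π) π) ?_ sdiff_subset
      exact ((hh_int s hs).norm.add (by simp)).div_const r
    refine Integrable.mono' hi ?_ ?_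
    · have := hh_meas s
      exact Measurable.aestronglyMeasurable (by fun_prop)
    · filter_upwards [self_mem_ae_restrict (measurableSet_Ioo.diff measurableSet_Icc)] with x hx
      rw [norm_div]
      have : r ≤ |x - u| := by
        by_contra hlt
        push Not at hlt
        rw [abs_lt] at hlt
        exact hx.2 ⟨by linarith [hlt.1], by linarith [hlt.2]⟩
      apply div_le_div₀ (by positivity) (abs_sub _ _) hr0 this
  refine (h1.union h2).mono_set ?_
  intro x hx
  by_cases h : x ∈ Icc (u - r) (u + r)
  · exact Or.inl h
  · exact Or.inr ⟨hx, h⟩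

lemma hh_bound (s : ℝ) (hs0 : 0 < s) (hs2 : s < 2) (hs1 : s ≠ 1) :
    ∃ C : ℝ, ∀ u : ℝ, u ≠ 0 → |u| ≤ 1 →
      |(∫ x in Ioo (-π) π, (hh s x - hh s u) / (x - u)) - π * Real.tan (π * s / 2) * |u| ^ (s - 1)| ≤ C := by
  obtain ⟨C, hC⟩ := FF_bound s hs0 hs2 hs1
  refine ⟨C, fun u hu hu1 => ?_⟩
  have hu' : 0 < |u| := abs_pos.2 hu
  obtain ⟨f1, f2⟩ := fold_int _ (hh_quot s u hs0 hu)
  have hae : ∀ᵐ x ∂(volume.restrict (Ioo 0 π)), (hh s x - hh s u) / (x - u) + (hh s (-x) - hh s u) / (-x - u) =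
      2 * (x ^ s - |u| ^ s) / (x ^ 2 - |u| ^ 2) := by
    filter_upwards [ae_restrict_of_ae (Measure.ae_ne volume u), ae_restrict_of_ae (Measure.ae_ne volume (-u)),
      self_mem_ae_restrict measurableSet_Ioo] with x h1 h2 h3
    have e1 := hh_mul s x h3.1.ne'
    rw [abs_of_pos h3.1] at e1
    rw [hh_neg, ← e1, ← hh_mul s u hu, sq_abs]
    have n1 : x - u ≠ 0 := sub_ne_zero.2 h1
    have n2 : x + u ≠ 0 := fun h => h2 (by linarith)
    rw [show -x - u = - (x + u) by ring, show x ^ 2 - u ^ 2 = (x - u) * (x + u) by ring]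
    field_simp
    ring
  rw [f2, integral_congr_ae hae]
  exact hC |u| hu' hu1 (f1.congr hae)

lemma far_bound (H : ℝ → ℝ) (hodd : ∀ x, H (-x) = - H x) (hint : IntegrableOn H (Ioo (-π) π))
    (u : ℝ) (hu : |u| ≤ 1) (n : ℤ) (hn : n ≠ 0) :
    IntegrableOn (fun x => H x / (x - u + 2 * π * (n:ℝ))) (Ioo (-π) π) ∧
    |∫ x in Ioo (-π) π, H x / (x - u + 2 * π * (n:ℝ))| ≤ (5 * ∫ x in Ioo (-π) π, |H x|) * (1 / (n:ℝ) ^ 2) := by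
  have hp := Real.pi_gt_three
  have hp4 := Real.pi_le_four
  have hn1 : (1:ℝ) ≤ |(n:ℝ)| := by exact_mod_cast Int.one_le_abs hn
  have hn0 : (n:ℝ) ≠ 0 := by exact_mod_cast hn
  have hxu : ∀ x ∈ Ioo (-π) π, |x - u| ≤ π + 1 := by
    intro x hx
    rw [abs_le] at hu ⊢
    constructor <;> linarith [hx.1, hx.2, hu.1, hu.2]
  have h2 : |2 * π * (n:ℝ)| = 2 * π * |(n:ℝ)| := by
    rw [abs_mul, abs_of_pos (by positivity)]
  have hden : ∀ x ∈ Ioo (-π) π, |(n:ℝ)| ≤ |x - u + 2 * π * (n:ℝ)| := by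
    intro x hx
    have h1 := hxu x hx
    have h3 := abs_sub_abs_le_abs_sub (2 * π * (n:ℝ)) (-(x - u))
    rw [abs_neg, h2, show 2 * π * (n:ℝ) - -(x - u) = x - u + 2 * π * (n:ℝ) by ring] at h3
    nlinarith
  have hmeas : AEStronglyMeasurable (fun x => H x / (x - u + 2 * π * (n:ℝ))) (volume.restrict (Ioo (-π) π)) := by
    have hm : Measurable (fun x : ℝ => (x - u + 2 * π * (n:ℝ))⁻¹) := by fun_prop
    simp_rw [div_eq_mul_inv]
    exact hint.aestronglyMeasurable.mul hm.aestronglyMeasurable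
  have hI : IntegrableOn (fun x => H x / (x - u + 2 * π * (n:ℝ))) (Ioo (-π) π) := by
    refine Integrable.mono' hint.norm hmeas ?_
    filter_upwards [self_mem_ae_restrict measurableSet_Ioo] with x hx
    rw [norm_div]
    exact div_le_self (norm_nonneg _) (hn1.trans (hden x hx))
  refine ⟨hI, ?_⟩
  have hz : ∫ x in Ioo (-π) π, H x = 0 := by
    rw [(fold_int H hint).2]
    simp [hodd]
  have he : ∫ x in Ioo (-π) π, H x / (x - u + 2 * π * (n:ℝ)) =
      ∫ x in Ioo (-π) π, (H x / (x - u + 2 * π * (n:ℝ)) - H x / (2 * π * n)) := by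
    rw [integral_sub hI (hint.div_const _), integral_div, hz]
    simp
  rw [he]
  have hb : IntegrableOn (fun x => 5 * |H x| * (1 / (n:ℝ) ^ 2)) (Ioo (-π) π) := (hint.norm.const_mul 5).mul_const _
  have := norm_integral_le_of_norm_le hb (f := fun x => H x / (x - u + 2 * π * (n:ℝ)) - H x / (2 * π * n)) (by
    filter_upwards [self_mem_ae_restrict measurableSet_Ioo] with x hx
    have hd := hden x hx
    have hx1 := hxu x hx
    have hd0 : x - u + 2 * π * (n:ℝ) ≠ 0 := by
      intro h0; rw [h0, abs_zero] at hd; linarith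
    have hq : H x / (x - u + 2 * π * (n:ℝ)) - H x / (2 * π * n) =
        H x * (-(x - u)) / ((x - u + 2 * π * (n:ℝ)) * (2 * π * n)) := by
      field_simp
      ring
    rw [hq, Real.norm_eq_abs, abs_div, abs_mul, abs_mul, abs_neg, h2, mul_one_div]
    apply div_le_div₀ (by positivity) _ (by positivity)
    · rw [← sq_abs, sq]
      apply mul_le_mul hd _ (abs_nonneg _) (abs_nonneg _)
      nlinarith
    · rw [mul_comm]
      apply mul_le_mul_of_nonneg_right _ (abs_nonneg _)
      linarith)
  rw [integral_mul_const, integral_const_mul] at this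
  exact this

lemma tsum_int_bound (a : ℤ → ℝ) (C : ℝ) (h : ∀ n : ℤ, n ≠ 0 → |a n| ≤ C * (1 / (n:ℝ) ^ 2)) :
    |(∑' n, a n) - a 0| ≤ ∑' n : ℤ, C * (1 / (n:ℝ) ^ 2) := by
  have hs : Summable (fun n : ℤ => C * (1 / (n:ℝ) ^ 2)) :=
    (Real.summable_one_div_int_pow.2 one_lt_two).mul_left C
  have ha : Summable a := by
    refine Summable.of_norm_bounded_eventually hs ?_
    have : ({0}ᶜ : Set ℤ) ∈ (cofinite : Filter ℤ) := (Set.finite_singleton 0).compl_mem_cofinite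
    filter_upwards [this] with n hn
    exact h n hn
  rw [ha.tsum_eq_add_tsum_ite 0, add_sub_cancel_left, ← Real.norm_eq_abs]
  refine tsum_of_norm_bounded hs.hasSum (fun n => ?_)
  by_cases hn : n = 0
  · simp [hn]
  · simp only [hn, if_false]; exact h n hn

lemma perExt_eq (g : ℝ → ℝ) (x : ℝ) (hx : x ∈ Ioo (-π) π) : perExt g x = g x := by
  have hp := Real.pi_pos
  have : ⌊(x + π) / (2 * π)⌋ = 0 := by
    rw [Int.floor_eq_zero_iff]
    refine ⟨div_nonneg (by linarith [hx.1]) (by linarith), ?_⟩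
    rw [div_lt_one (by linarith)]
    linarith [hx.2]
  simp [perExt, this]

lemma deriv_abs_rpow (s x : ℝ) (hx : x ≠ 0) : HasDerivAt (fun x : ℝ => |x| ^ s) (s * hh s x) x := by
  have h0 : 0 < |x| := abs_pos.2 hx
  have := (hasDerivAt_abs hx).rpow_const (p := s) (Or.inl h0.ne')
  convert this using 1
  have e : |x| ^ (s - 1) = |x| * |x| ^ (s - 2) := by
    rw [show s - 1 = 1 + (s - 2) by ring, Real.rpow_add h0, Real.rpow_one]
  have e2 : (SignType.sign x : ℝ) * |x| = x := sign_mul_abs x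
  rw [e, hh]
  nth_rewrite 1 [← e2]
  ring

lemma deriv_perExt (A B μ x : ℝ) (hx : x ∈ Ioo (-π) π) (hx0 : x ≠ 0) :
    deriv (perExt (fun x => A * |x| ^ ((2:ℝ)/3) + B * |x| ^ μ)) x =
      (A * (2 / 3)) * hh (2 / 3) x + (B * μ) * hh μ x := by
  have he : perExt (fun x => A * |x| ^ ((2:ℝ)/3) + B * |x| ^ μ) =ᶠ[nhds x]
      (fun x => A * |x| ^ ((2:ℝ)/3) + B * |x| ^ μ) := by
    filter_upwards [Ioo_mem_nhds hx.1 hx.2] with y hy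
    exact perExt_eq _ y hy
  rw [he.deriv_eq]
  have := ((deriv_abs_rpow (2 / 3) x hx0).const_mul A).add ((deriv_abs_rpow μ x hx0).const_mul B)
  rw [HasDerivAt.deriv (f := fun x => A * |x| ^ ((2:ℝ)/3) + B * |x| ^ μ) this]
  ring

lemma log_bound (u : ℝ) (hu : |u| ≤ 1) : |Real.log ((π - u) / (π + u))| ≤ |u| := by
  have hp := Real.pi_gt_three
  have h := abs_le.1 hu
  have h1 : 0 < π - u := by linarith [h.2]
  have h2 : 0 < π + u := by linarith [h.1]
  have a1 := Real.log_le_sub_one_of_pos (div_pos h1 h2)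
  have a2 := Real.log_le_sub_one_of_pos (div_pos h2 h1)
  rw [show (π + u) / (π - u) = ((π - u) / (π + u))⁻¹ by rw [inv_div], Real.log_inv, inv_div] at a2
  have b1 : (π - u) / (π + u) - 1 ≤ |u| := by
    rw [sub_le_iff_le_add, div_le_iff₀ h2]
    nlinarith [neg_abs_le u, abs_nonneg u]
  have b2 : (π + u) / (π - u) - 1 ≤ |u| := by
    rw [sub_le_iff_le_add, div_le_iff₀ h1]
    nlinarith [le_abs_self u, abs_nonneg u]
  rw [abs_le]
  constructor <;> linarith

lemma hh_log (s u : ℝ) (hs : 0 < s) (hu : u ≠ 0) (hu1 : |u| ≤ 1) :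
    |hh s u * Real.log ((π - u) / (π + u))| ≤ 1 := by
  rw [abs_mul]
  calc |hh s u| * |Real.log ((π - u) / (π + u))| ≤ |hh s u| * |u| :=
        mul_le_mul_of_nonneg_left (log_bound u hu1) (abs_nonneg _)
    _ = |u * hh s u| := by rw [abs_mul, mul_comm]
    _ = |u| ^ s := by rw [hh_mul s u hu, abs_of_nonneg (Real.rpow_nonneg (abs_nonneg _) _)]
    _ ≤ 1 := Real.rpow_le_one (abs_nonneg _) hu1 hs.le

lemma Kinf_bound (A B μ : ℝ) (hμ : μ ∈ Set.Ioo (2/3 : ℝ) 2) (hμ1 : μ ≠ 1) :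
    ∃ C : ℝ, ∀ u : ℝ, u ≠ 0 → |u| ≤ 1 →
      |Kinf (perExt (fun x => A * |x| ^ ((2:ℝ)/3) + B * |x| ^ μ)) u
        + (2 / Real.sqrt 3) * A * |u| ^ ((2:ℝ)/3 - 1) + B * μ * Real.tan (π * μ / 2) * |u| ^ (μ - 1)| ≤ C := by
  have hp := Real.pi_gt_three
  obtain ⟨C₁, h1⟩ := hh_bound (2 / 3) (by norm_num) (by norm_num) (by norm_num)
  obtain ⟨C₂, h2⟩ := hh_bound μ (by linarith [hμ.1]) hμ.2 hμ1
  set a := A * (2 / 3) with ha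
  set b := B * μ with hb
  set H : ℝ → ℝ := fun x => a * hh (2 / 3) x + b * hh μ x with hH
  have hHint : IntegrableOn H (Ioo (-π) π) :=
    ((hh_int (2 / 3) (by norm_num)).const_mul a).add ((hh_int μ (by linarith [hμ.1])).const_mul b)
  have hodd : ∀ x, H (-x) = - H x := by
    intro x; simp only [hH, hh_neg]; ring
  set C₃ := ∑' n : ℤ, (5 * ∫ x in Ioo (-π) π, |H x|) * (1 / (n:ℝ) ^ 2) with hC3
  refine ⟨|a| * C₁ + |b| * C₂ + (|a| + |b|) + C₃, fun u hu hu1 => ?_⟩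
  have hμ0 : 0 < μ := by linarith [hμ.1]
  have hum : u ∈ Ioo (-π) π := by
    have := abs_le.1 hu1
    constructor <;> linarith [this.1, this.2]
  set P : ℤ → ℝ := fun n => pvInt (fun x => deriv (perExt (fun x => A * |x| ^ ((2:ℝ)/3) + B * |x| ^ μ)) x
      / (x - u + 2 * π * (n:ℝ))) u with hP
  have hder : ∀ x ∈ Ioo (-π) π, x ≠ 0 →
      deriv (perExt (fun x => A * |x| ^ ((2:ℝ)/3) + B * |x| ^ μ)) x = H x :=
    fun x hx hx0 => deriv_perExt A B μ x hx hx0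
  have hPn : ∀ n : ℤ, n ≠ 0 → |P n| ≤ (5 * ∫ x in Ioo (-π) π, |H x|) * (1 / (n:ℝ) ^ 2) := by
    intro n hn
    obtain ⟨g1, g2⟩ := far_bound H hodd hHint u hu1 n hn
    have : P n = ∫ x in Ioo (-π) π, H x / (x - u + 2 * π * (n:ℝ)) := by
      apply pv_lim _ _ u _ _ (trunc_tendsto _ u g1)
      intro x hx hx0
      rw [hder x hx hx0]
    rw [this]
    exact g2
  have hsum := tsum_int_bound P _ hPn
  rw [← hC3] at hsum
  set I₁ := ∫ x in Ioo (-π) π, (hh (2 / 3) x - hh (2 / 3) u) / (x - u) with hI1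
  set I₂ := ∫ x in Ioo (-π) π, (hh μ x - hh μ u) / (x - u) with hI2
  set l := Real.log ((π - u) / (π + u)) with hl
  have i1 := hh_quot (2 / 3) u (by norm_num) hu
  have i2 := hh_quot μ u hμ0 hu
  have hfun : (fun x => (H x - H u) / (x - u)) = fun x => a * ((hh (2 / 3) x - hh (2 / 3) u) / (x - u))
      + b * ((hh μ x - hh μ u) / (x - u)) := by
    funext x; simp only [hH]; ring
  have hP0 : P 0 = a * I₁ + b * I₂ + H u * l := by
    have hi : IntegrableOn (fun x => (H x - H u) / (x - u)) (Ioo (-π) π) := by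
      rw [hfun]; exact (i1.const_mul a).add (i2.const_mul b)
    have e : ∫ x in Ioo (-π) π, (H x - H u) / (x - u) = a * I₁ + b * I₂ := by
      rw [hfun, integral_add (i1.const_mul a) (i2.const_mul b), integral_const_mul, integral_const_mul]
    rw [← e]
    apply pv_lim _ _ u _ _ (pv_general H u hum hi)
    intro x hx hx0
    rw [hder x hx hx0]
    simp
  have hK : Kinf (perExt (fun x => A * |x| ^ ((2:ℝ)/3) + B * |x| ^ μ)) u = -((1 / π) * ∑' n, P n) := rfl
  have ht : A * (2 / 3) * Real.tan (π * (2 / 3) / 2) = (2 / Real.sqrt 3) * A := by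
    rw [show π * (2 / 3) / 2 = π / 3 by ring, Real.tan_pi_div_three]
    have h3 : 0 < Real.sqrt 3 := by positivity
    have h4 : Real.sqrt 3 ^ 2 = 3 := Real.sq_sqrt (by norm_num)
    field_simp
    rw [h4]
  have key : Kinf (perExt (fun x => A * |x| ^ ((2:ℝ)/3) + B * |x| ^ μ)) u
        + (2 / Real.sqrt 3) * A * |u| ^ ((2:ℝ)/3 - 1) + b * Real.tan (π * μ / 2) * |u| ^ (μ - 1) =
      -((1 / π) * (a * (I₁ - π * Real.tan (π * (2 / 3) / 2) * |u| ^ ((2:ℝ)/3 - 1))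
        + b * (I₂ - π * Real.tan (π * μ / 2) * |u| ^ (μ - 1))
        + (a * (hh (2 / 3) u * l) + b * (hh μ u * l)) + ((∑' n, P n) - P 0))) := by
    rw [hK, hP0, ← ht]
    simp only [hH]
    field_simp
    ring
  rw [key, abs_neg, abs_mul, abs_of_pos (by positivity)]
  have q1 := mul_le_mul_of_nonneg_left (h1 u hu hu1) (abs_nonneg a)
  have q2 := mul_le_mul_of_nonneg_left (h2 u hu hu1) (abs_nonneg b)
  have q3 := mul_le_mul_of_nonneg_left (hh_log (2 / 3) u (by norm_num) hu hu1) (abs_nonneg a)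
  have q4 := mul_le_mul_of_nonneg_left (hh_log μ u hμ0 hu hu1) (abs_nonneg b)
  rw [← abs_mul] at q1 q2 q3 q4
  have hle : 1 / π ≤ 1 := by rw [div_le_one (by positivity)]; linarith
  refine (mul_le_of_le_one_left (abs_nonneg _) hle).trans ?_
  refine (abs_add_le _ _).trans (add_le_add ((abs_add_le _ _).trans (add_le_add ((abs_add_le _ _).trans
    (add_le_add q1 q2)) ((abs_add_le _ _).trans ?_))) hsum)
  linarith

/-- Expansion of `f · K_∞ f` for `f` the `2π`-periodic extension of `A|u|^(2/3) + B|u|^μ`. -/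
theorem expansion_f_Kinf_f (A B μ : ℝ) (hA : 0 < A) (hμ : μ ∈ Set.Ioo (2/3 : ℝ) 2)
    (hμ1 : μ ≠ 1) :
    ∃ R₁ R₂ : ℝ → ℝ,
      R₁ =O[nhdsWithin (0:ℝ) {0}ᶜ] (fun u => |u| ^ ((2:ℝ)/3)) ∧
      R₂ =o[nhdsWithin (0:ℝ) {0}ᶜ] (fun u => |u| ^ (μ - 1/3)) ∧
      ∀ᶠ u in nhdsWithin (0:ℝ) {0}ᶜ,
        perExt (fun x => A * |x| ^ ((2:ℝ)/3) + B * |x| ^ μ) u *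
            Kinf (perExt (fun x => A * |x| ^ ((2:ℝ)/3) + B * |x| ^ μ)) u =
          -(2/Real.sqrt 3) * A^2 * |u| ^ ((1:ℝ)/3)
            - A * B * (2/Real.sqrt 3 + μ * Real.tan (π*μ/2)) * |u| ^ (μ - 1/3)
            + R₁ u + R₂ u := by
  obtain ⟨C, hC⟩ := Kinf_bound A B μ hμ hμ1
  have hp := Real.pi_gt_three
  set f := perExt (fun x => A * |x| ^ ((2:ℝ)/3) + B * |x| ^ μ) with hf
  set E : ℝ → ℝ := fun u => Kinf f u
    + (2 / Real.sqrt 3) * A * |u| ^ ((2:ℝ)/3 - 1) + B * μ * Real.tan (π * μ / 2) * |u| ^ (μ - 1) with hE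
  have hsmall : ∀ᶠ u in nhdsWithin (0:ℝ) {0}ᶜ, u ≠ 0 ∧ |u| ≤ 1 := by
    filter_upwards [self_mem_nhdsWithin, nhdsWithin_le_nhds (Icc_mem_nhds (show (-1:ℝ) < 0 by norm_num) (show (0:ℝ) < 1 by norm_num))]
      with u h1 h2
    exact ⟨h1, abs_le.2 h2⟩
  have hfu : ∀ u : ℝ, |u| ≤ 1 → f u = A * |u| ^ ((2:ℝ)/3) + B * |u| ^ μ := by
    intro u hu
    apply perExt_eq
    have := abs_le.1 hu
    constructor <;> linarith [this.1, this.2]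
  refine ⟨fun u => f u * E u, fun u => - (B ^ 2 * μ * Real.tan (π * μ / 2)) * |u| ^ (2 * μ - 1), ?_, ?_, ?_⟩
  · apply IsBigO.of_bound ((A + |B|) * C)
    filter_upwards [hsmall] with u hu
    rw [norm_mul, hfu u hu.2, Real.norm_of_nonneg (Real.rpow_nonneg (abs_nonneg u) _)]
    have hE1 : ‖E u‖ ≤ C := hC u hu.1 hu.2
    have hpos : 0 < |u| := abs_pos.2 hu.1
    have hle : |u| ^ μ ≤ |u| ^ ((2:ℝ)/3) := Real.rpow_le_rpow_of_exponent_ge hpos hu.2 hμ.1.le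
    have hf1 : ‖A * |u| ^ ((2:ℝ)/3) + B * |u| ^ μ‖ ≤ (A + |B|) * |u| ^ ((2:ℝ)/3) := by
      refine (norm_add_le _ _).trans ?_
      rw [norm_mul, norm_mul, Real.norm_of_nonneg hA.le, Real.norm_eq_abs B,
        Real.norm_of_nonneg (Real.rpow_nonneg (abs_nonneg u) _), Real.norm_of_nonneg (Real.rpow_nonneg (abs_nonneg u) _)]
      have := mul_le_mul_of_nonneg_left hle (abs_nonneg B)
      linarith
    calc _ ≤ ((A + |B|) * |u| ^ ((2:ℝ)/3)) * C := by
          apply mul_le_mul hf1 hE1 (norm_nonneg _)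
          have := Real.rpow_nonneg (abs_nonneg u) ((2:ℝ)/3)
          positivity
      _ = _ := by ring
  · apply IsLittleO.const_mul_left
    have ht : Tendsto (fun u : ℝ => |u| ^ (μ - 2/3)) (nhdsWithin (0:ℝ) {0}ᶜ) (nhds 0) := by
      have hc : Continuous (fun u : ℝ => |u| ^ (μ - 2/3)) :=
        continuous_abs.rpow_const (fun x => Or.inr (by linarith [hμ.1]))
      have := hc.tendsto 0
      simp only [abs_zero] at this
      rw [Real.zero_rpow (by linarith [hμ.1])] at this
      exact this.mono_left nhdsWithin_le_nhds
    have h1 : (fun u : ℝ => |u| ^ (μ - 2/3)) =o[nhdsWithin (0:ℝ) {0}ᶜ] (fun _ => (1:ℝ)) :=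
      (isLittleO_one_iff ℝ).2 ht
    have h2 := h1.mul_isBigO (isBigO_refl (fun u : ℝ => |u| ^ (μ - 1/3)) (nhdsWithin (0:ℝ) {0}ᶜ))
    refine h2.congr' ?_ (by simp)
    filter_upwards [hsmall] with u hu
    rw [← Real.rpow_add (abs_pos.2 hu.1)]
    congr 1; ring
  · filter_upwards [hsmall] with u hu
    have hpos : 0 < |u| := abs_pos.2 hu.1
    have hK : Kinf f u = E u - (2 / Real.sqrt 3) * A * |u| ^ ((2:ℝ)/3 - 1)
        - B * μ * Real.tan (π * μ / 2) * |u| ^ (μ - 1) := by simp only [hE]; ring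
    have e1 : |u| ^ ((1:ℝ)/3) = |u| ^ ((2:ℝ)/3) * |u| ^ ((2:ℝ)/3 - 1) := by
      rw [← Real.rpow_add hpos]; congr 1; norm_num
    have e2 : |u| ^ (μ - 1/3) = |u| ^ ((2:ℝ)/3) * |u| ^ (μ - 1) := by
      rw [← Real.rpow_add hpos]; congr 1; ring
    have e3 : |u| ^ (μ - 1/3) = |u| ^ μ * |u| ^ ((2:ℝ)/3 - 1) := by
      rw [← Real.rpow_add hpos]; congr 1; ring
    have e4 : |u| ^ (2 * μ - 1) = |u| ^ μ * |u| ^ (μ - 1) := by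
      rw [← Real.rpow_add hpos]; congr 1; ring
    rw [hK, e1, e4, mul_sub, mul_sub, hfu u hu.2]
    linear_combination (2 / Real.sqrt 3) * A * B * e3 + A * B * μ * Real.tan (π * μ / 2) * e2
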